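/- arXiv:2306.17800 — 2 statements merged into one kernel-verified Lean document; each statement's English description precedes it below -/
import Mathlib

section
/- The quasi-shuffle section coefficients on standardized interval partitions are coassociative: for all 𝔰, 𝔱, 𝔲, 𝔤 ∈ IPs, Σ_{𝔥 ∈ IPs} c(𝔰,𝔱;𝔥)·c(𝔥,𝔲;𝔤) = Σ_{𝔥 ∈ IPs} c(𝔱,𝔲;𝔥)·c(𝔰,𝔥;𝔤), where only finitely many summands are nonzero. -/
/-!
The coefficient `secCoeff s t g` counts pairs of ground sets, but an interval partition is
determined by its ground set and its standardization, so it equally counts pairs `(I, I')` of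
interval partitions with standardizations `s`, `t` and gluing `g` (`secCoeff_eq`).

The number of such pairs with gluing `J` depends only on `stdIP J`
(`ncard_gluePairs_stdIP`): the order isomorphism between the ground sets of `J` and `stdIP J`
transports decompositions in both directions. Blocks stay intervals because each block of a
decomposition lies in one block of `J`. Hence `secCoeff s t h * secCoeff h u g` counts the triples
`(I, I', K)` with standardizations `s`, `t`, `u`, gluing `(I ⋎ I') ⋎ K = g` and
`stdIP (I ⋎ I') = h` (`secCoeff_mul_eq`), and summing over `h` yields the number of all triples
that glue to `g` (`finsum_secCoeff_mul`).

Gluing is commutative and associative, because the blocks of the gluing of a family of nonempty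
sets are the classes of the equivalence relation on points generated by lying in a common
member (`mem_glueFam`, `glueFam_glueFam_union`). So the set of triples can be rotated
(`glueTriples_rotate`), and the two sides of coassociativity count the same triples.
-/

open Set

/-- A block: a nonempty interval of consecutive positive integers. -/
def IsIntervalBlock (B : Set ℕ) : Prop :=
  B.Nonempty ∧ (∀ x ∈ B, 1 ≤ x) ∧
    ∀ x ∈ B, ∀ z ∈ B, ∀ y : ℕ, x ≤ y → y ≤ z → y ∈ B

/-- An interval partition of a finite subset of the positive integers:
a family of pairwise disjoint nonempty intervals with finite ground set. -/
def IsIntervalPartition (P : Set (Set ℕ)) : Prop :=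
  (⋃₀ P).Finite ∧ (∀ B ∈ P, IsIntervalBlock B) ∧
    ∀ B ∈ P, ∀ C ∈ P, B ≠ C → B ∩ C = ∅

/-- An interval partition with prescribed ground set `A`. -/
def IsIntervalPartitionOf (P : Set (Set ℕ)) (A : Set ℕ) : Prop :=
  IsIntervalPartition P ∧ ⋃₀ P = A

/-- Standardized interval partitions: interval partitions of `{1, …, n}`. -/
def IsStdIP (P : Set (Set ℕ)) : Prop :=
  IsIntervalPartition P ∧ ∃ n : ℕ, ⋃₀ P = Set.Icc 1 n

/-- Refinement order: same ground set, and every block of `P`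
is contained in some block of `Q`. -/
def IPle (P Q : Set (Set ℕ)) : Prop :=
  ⋃₀ P = ⋃₀ Q ∧ ∀ B ∈ P, ∃ C ∈ Q, B ⊆ C

/-- The equivalence relation on blocks generated by having nonempty
intersection (among members of `S`). -/
def glueRel (S : Set (Set ℕ)) : Set ℕ → Set ℕ → Prop :=
  Relation.EqvGen fun X Y => X ∈ S ∧ Y ∈ S ∧ (X ∩ Y).Nonempty

/-- Gluing of two interval partitions. -/
def glue (P Q : Set (Set ℕ)) : Set (Set ℕ) :=
  (fun T => ⋃₀ {X ∈ P ∪ Q | glueRel (P ∪ Q) T X}) '' (P ∪ Q)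

/-- The relation on `A` generated by `y = x + 1`. -/
def cliqueRel (A : Set ℕ) : ℕ → ℕ → Prop :=
  Relation.EqvGen fun x y => x ∈ A ∧ y ∈ A ∧ y = x + 1

/-- `cliques A`: the coarsest interval partition of `A`. -/
def cliques (A : Set ℕ) : Set (Set ℕ) :=
  (fun x => {y ∈ A | cliqueRel A x y}) '' A

/-- `𝓘(A)`: the interval partition of `A ∩ ⋃₀ 𝓘` induced by `𝓘`. -/
def restrictIP (P : Set (Set ℕ)) (A : Set ℕ) : Set (Set ℕ) :=
  {Z | Z ≠ ∅ ∧ ∃ B ∈ P, ∃ c ∈ cliques A, Z = B ∩ c}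

/-- The unique order preserving map sending a finite `S ⊆ ℕ` onto `{1,…,|S|}`. -/
noncomputable def stdMap (S : Set ℕ) (x : ℕ) : ℕ := {y ∈ S | y ≤ x}.ncard

/-- Standardization of an interval partition. -/
noncomputable def stdIP (P : Set (Set ℕ)) : Set (Set ℕ) :=
  (fun B => stdMap (⋃₀ P) '' B) '' P

/-- Shifting all blocks of a partition up by `m`. -/
def shiftIP (m : ℕ) (P : Set (Set ℕ)) : Set (Set ℕ) :=
  (fun B => (fun x => x + m) '' B) '' P

/-- Concatenation of standardized interval partitions. -/
noncomputable def concatIP (P Q : Set (Set ℕ)) : Set (Set ℕ) :=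
  P ∪ shiftIP (⋃₀ P).ncard Q

/-- Quasi-shuffle section coefficient `c(𝔰,𝔱;𝔤)`. -/
noncomputable def secCoeff (s t g : Set (Set ℕ)) : ℕ :=
  {p : Set ℕ × Set ℕ | p.1 ∪ p.2 = ⋃₀ g ∧
      ∃ I I' : Set (Set ℕ), IsIntervalPartitionOf I p.1 ∧ IsIntervalPartitionOf I' p.2 ∧
        stdIP I = s ∧ stdIP I' = t ∧ glue I I' = g}.ncard

/-- The signature pairing `⟨IPC(𝔏), 𝔰⟩`. -/
noncomputable def IPC (L s : Set (Set ℕ)) : ℕ :=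
  {A : Set ℕ | A ⊆ ⋃₀ L ∧ IPle s (stdIP (restrictIP L A))}.ncard

open Classical in
/-- The unique refinement `𝓘_𝔰` of `𝓘` with standardization `𝔰` (junk value otherwise). -/
noncomputable def refineTo (P s : Set (Set ℕ)) : Set (Set ℕ) :=
  if h : ∃ Q : Set (Set ℕ), IsIntervalPartition Q ∧ IPle Q P ∧ stdIP Q = s then h.choose
  else ∅

/-- The concatenation of single blocks of the sizes listed in `l`. -/
noncomputable def concatList (l : List ℕ) : Set (Set ℕ) :=
  l.foldl (fun acc m => concatIP acc {Set.Icc 1 m}) ∅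

/-- A permutation of `{1,…,n}`, encoded as a function on `ℕ` fixing everything else. -/
def IsPermOf (n : ℕ) (σ : ℕ → ℕ) : Prop :=
  Set.BijOn σ (Set.Icc 1 n) (Set.Icc 1 n) ∧ ∀ x : ℕ, x ∉ Set.Icc 1 n → σ x = x

open Classical in
/-- The `i`-th smallest element of `A` (junk value otherwise). -/
noncomputable def nthElt (A : Set ℕ) (i : ℕ) : ℕ :=
  if h : ∃ x ∈ A, stdMap A x = i then h.choose else 0

/-- Standardization `st(Λ|_A)` of `Λ` restricted to `A`: the permutation of `{1,…,|A|}`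
recording the relative order of the values of `Λ` on `A`. -/
noncomputable def stdRestrict (lam : ℕ → ℕ) (A : Set ℕ) : ℕ → ℕ := fun i =>
  if 1 ≤ i ∧ i ≤ A.ncard then {b ∈ A | lam b ≤ lam (nthElt A i)}.ncard else i

/-- Concatenation `σ ⊡ τ` of permutations of `{1,…,m}` and `{1,…,n}`. -/
def permConcat (m n : ℕ) (σ τ : ℕ → ℕ) : ℕ → ℕ := fun i =>
  if 1 ≤ i ∧ i ≤ m then σ i
  else if m + 1 ≤ i ∧ i ≤ m + n then τ (i - m) + m
  else i

/-- A vincular pattern: a standardized interval partition of `{1,…,n}`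
together with a permutation of `{1,…,n}`. -/
def IsVincular (p : Set (Set ℕ) × (ℕ → ℕ)) : Prop :=
  ∃ n : ℕ, IsIntervalPartitionOf p.1 (Set.Icc 1 n) ∧ IsPermOf n p.2

/-- Concatenation of vincular patterns. -/
noncomputable def vincConcat (p q : Set (Set ℕ) × (ℕ → ℕ)) : Set (Set ℕ) × (ℕ → ℕ) :=
  (concatIP p.1 q.1, permConcat (⋃₀ p.1).ncard (⋃₀ q.1).ncard p.2 q.2)

/-- Vincular section coefficient `C((𝔰,σ),(𝔱,τ);(𝔤,γ))`. -/
noncomputable def vincCoeff (p q r : Set (Set ℕ) × (ℕ → ℕ)) : ℕ :=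
  {AB : Set ℕ × Set ℕ | AB.1 ∪ AB.2 = ⋃₀ r.1 ∧
      (∃ I I' : Set (Set ℕ), IsIntervalPartitionOf I AB.1 ∧ IsIntervalPartitionOf I' AB.2 ∧
        stdIP I = p.1 ∧ stdIP I' = q.1 ∧ glue I I' = r.1) ∧
      stdRestrict r.2 AB.1 = p.2 ∧ stdRestrict r.2 AB.2 = q.2}.ncard

/-- Vincular signature pairing `⟨GPC(𝔏,Λ), (𝔰,σ)⟩`. -/
noncomputable def GPC (L : Set (Set ℕ)) (lam : ℕ → ℕ) (p : Set (Set ℕ) × (ℕ → ℕ)) : ℕ :=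
  {A : Set ℕ | A ⊆ ⋃₀ L ∧ IPle p.1 (stdIP (restrictIP L A)) ∧ stdRestrict lam A = p.2}.ncard

/-! ### Gluing through a relation on points -/

/-- The equivalence relation on points generated by lying in a common member of `S`. -/
def ptRel (S : Set (Set ℕ)) : ℕ → ℕ → Prop :=
  Relation.EqvGen fun x y => ∃ X ∈ S, x ∈ X ∧ y ∈ X

/-- The gluing of a single family of sets, so that `glue P Q` is `glueFam (P ∪ Q)` by definition. -/
def glueFam (S : Set (Set ℕ)) : Set (Set ℕ) :=
  (fun T => ⋃₀ {X ∈ S | glueRel S T X}) '' S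

lemma ptRel.symm {S : Set (Set ℕ)} {x y : ℕ} (h : ptRel S x y) : ptRel S y x :=
  Relation.EqvGen.symm _ _ h

lemma ptRel.trans {S : Set (Set ℕ)} {x y z : ℕ} (h : ptRel S x y) (h' : ptRel S y z) :
    ptRel S x z :=
  Relation.EqvGen.trans _ _ _ h h'

lemma ptRel.of_mem {S : Set (Set ℕ)} {X : Set ℕ} {x y : ℕ} (hX : X ∈ S) (hx : x ∈ X)
    (hy : y ∈ X) : ptRel S x y :=
  Relation.EqvGen.rel _ _ ⟨X, hX, hx, hy⟩

lemma ptRel_of_glueRel {S : Set (Set ℕ)} (hS : ∀ X ∈ S, X.Nonempty) {T X : Set ℕ}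
    (h : glueRel S T X) :
    T = X ∨ (T ∈ S ∧ X ∈ S ∧ ∀ x ∈ T, ∀ y ∈ X, ptRel S x y) := by
  induction h with
  | rel X Y h =>
    obtain ⟨hX, hY, z, hzX, hzY⟩ := h
    exact Or.inr ⟨hX, hY, fun x hx y hy => (ptRel.of_mem hX hx hzX).trans (ptRel.of_mem hY hzY hy)⟩
  | refl X => exact Or.inl rfl
  | symm X Y _ ih =>
    rcases ih with rfl | ⟨hX, hY, h⟩
    · exact Or.inl rfl
    · exact Or.inr ⟨hY, hX, fun x hx y hy => (h y hy x hx).symm⟩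
  | trans X Y Z _ _ ih1 ih2 =>
    rcases ih1 with rfl | ⟨hX, hY, h⟩
    · exact ih2
    rcases ih2 with rfl | ⟨_, hZ, h'⟩
    · exact Or.inr ⟨hX, hY, h⟩
    obtain ⟨y, hy⟩ := hS Y hY
    exact Or.inr ⟨hX, hZ, fun x hx z hz => (h x hx y hy).trans (h' y hy z hz)⟩

lemma glueRel_of_ptRel {S : Set (Set ℕ)} {x y : ℕ} (h : ptRel S x y) :
    (x ∈ ⋃₀ S ↔ y ∈ ⋃₀ S) ∧ ∀ X ∈ S, ∀ Y ∈ S, x ∈ X → y ∈ Y → glueRel S X Y := by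
  induction h with
  | rel x y h =>
    obtain ⟨Z, hZ, hx, hy⟩ := h
    refine ⟨⟨fun _ => ⟨Z, hZ, hy⟩, fun _ => ⟨Z, hZ, hx⟩⟩, fun X hX Y hY hxX hyY => ?_⟩
    exact Relation.EqvGen.trans _ Z _ (Relation.EqvGen.rel _ _ ⟨hX, hZ, x, hxX, hx⟩)
      (Relation.EqvGen.rel _ _ ⟨hZ, hY, y, hy, hyY⟩)
  | refl x =>
    exact ⟨Iff.rfl, fun X hX Y hY hxX hyY => Relation.EqvGen.rel _ _ ⟨hX, hY, x, hxX, hyY⟩⟩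
  | symm x y _ ih =>
    exact ⟨ih.1.symm, fun X hX Y hY hxX hyY =>
      Relation.EqvGen.symm _ _ (ih.2 Y hY X hX hyY hxX)⟩
  | trans x y z _ _ ih1 ih2 =>
    refine ⟨ih1.1.trans ih2.1, fun X hX Z hZ hxX hzZ => ?_⟩
    obtain ⟨Y, hY, hyY⟩ := ih1.1.1 ⟨X, hX, hxX⟩
    exact Relation.EqvGen.trans _ Y _ (ih1.2 X hX Y hY hxX hyY) (ih2.2 Y hY Z hZ hyY hzZ)

lemma glueClass_eq {S : Set (Set ℕ)} (hS : ∀ X ∈ S, X.Nonempty) {T : Set ℕ} (hT : T ∈ S)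
    {x : ℕ} (hx : x ∈ T) : ⋃₀ {X ∈ S | glueRel S T X} = {y | ptRel S x y} := by
  ext y
  constructor
  · rintro ⟨X, ⟨hX, h⟩, hy⟩
    rcases ptRel_of_glueRel hS h with rfl | ⟨_, _, h⟩
    · exact ptRel.of_mem hT hx hy
    · exact h x hx y hy
  · intro h
    obtain ⟨h1, h2⟩ := glueRel_of_ptRel h
    obtain ⟨Y, hY, hy⟩ := h1.1 ⟨T, hT, hx⟩
    exact ⟨Y, ⟨hY, h2 T hT Y hY hx hy⟩, hy⟩

/-- For nonempty members, gluing produces exactly the classes of the point relation. -/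
lemma mem_glueFam {S : Set (Set ℕ)} (hS : ∀ X ∈ S, X.Nonempty) {C : Set ℕ} :
    C ∈ glueFam S ↔ ∃ x ∈ ⋃₀ S, C = {y | ptRel S x y} := by
  constructor
  · rintro ⟨T, hT, rfl⟩
    obtain ⟨x, hx⟩ := hS T hT
    exact ⟨x, ⟨T, hT, hx⟩, glueClass_eq hS hT hx⟩
  · rintro ⟨x, ⟨T, hT, hx⟩, rfl⟩
    exact ⟨T, hT, glueClass_eq hS hT hx⟩

lemma sUnion_glueFam {S : Set (Set ℕ)} (hS : ∀ X ∈ S, X.Nonempty) : ⋃₀ glueFam S = ⋃₀ S := by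
  ext y
  constructor
  · rintro ⟨C, hC, hy⟩
    obtain ⟨x, hx, rfl⟩ := (mem_glueFam hS).1 hC
    exact (glueRel_of_ptRel hy).1.1 hx
  · intro hy
    exact ⟨_, (mem_glueFam hS).2 ⟨y, hy, rfl⟩, Relation.EqvGen.refl _⟩

lemma nonempty_of_mem_glueFam {S : Set (Set ℕ)} (hS : ∀ X ∈ S, X.Nonempty) {C : Set ℕ}
    (hC : C ∈ glueFam S) : C.Nonempty := by
  obtain ⟨x, _, rfl⟩ := (mem_glueFam hS).1 hC
  exact ⟨x, Relation.EqvGen.refl _⟩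

lemma exists_superset_glueFam {S : Set (Set ℕ)} (hS : ∀ X ∈ S, X.Nonempty) {X : Set ℕ}
    (hX : X ∈ S) : ∃ C ∈ glueFam S, X ⊆ C := by
  obtain ⟨x, hx⟩ := hS X hX
  exact ⟨_, (mem_glueFam hS).2 ⟨x, ⟨X, hX, hx⟩, rfl⟩, fun y hy => ptRel.of_mem hX hx hy⟩

lemma nonempty_of_mem_union {P Q : Set (Set ℕ)} (hP : ∀ X ∈ P, X.Nonempty)
    (hQ : ∀ X ∈ Q, X.Nonempty) : ∀ X ∈ P ∪ Q, X.Nonempty := by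
  rintro X (h | h)
  exacts [hP X h, hQ X h]

/-- Gluing part of a family first does not change the final gluing; associativity of `glue`
follows from this. -/
lemma glueFam_glueFam_union {S K : Set (Set ℕ)} (hS : ∀ X ∈ S, X.Nonempty)
    (hK : ∀ X ∈ K, X.Nonempty) : glueFam (glueFam S ∪ K) = glueFam (S ∪ K) := by
  have hmono : ∀ x y, ptRel S x y → ptRel (S ∪ K) x y := fun x y h =>
    Relation.EqvGen.mono (fun _ _ ⟨X, hX, hx, hy⟩ => ⟨X, Or.inl hX, hx, hy⟩) x y h
  have hrel : ∀ x y, ptRel (glueFam S ∪ K) x y ↔ ptRel (S ∪ K) x y := by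
    intro x y
    constructor
    · intro h
      induction h with
      | rel x y h =>
        obtain ⟨X, hX | hX, hx, hy⟩ := h
        · obtain ⟨z, _, rfl⟩ := (mem_glueFam hS).1 hX
          exact hmono _ _ (ptRel.trans (ptRel.symm hx) hy)
        · exact ptRel.of_mem (Or.inr hX) hx hy
      | refl x => exact Relation.EqvGen.refl _
      | symm x y _ ih => exact ih.symm
      | trans x y z _ _ ih1 ih2 => exact ih1.trans ih2
    · intro h
      refine Relation.EqvGen.mono (fun x y hxy => ?_) x y h
      obtain ⟨X, hX | hX, hx, hy⟩ := hxy
      · obtain ⟨C, hC, hXC⟩ := exists_superset_glueFam hS hX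
        exact ⟨C, Or.inl hC, hXC hx, hXC hy⟩
      · exact ⟨X, Or.inr hX, hx, hy⟩
  ext C
  rw [mem_glueFam (nonempty_of_mem_union (fun X hX => nonempty_of_mem_glueFam hS hX) hK),
    mem_glueFam (nonempty_of_mem_union hS hK)]
  simp only [sUnion_union, sUnion_glueFam hS, hrel]

lemma glue_eq_glueFam (P Q : Set (Set ℕ)) : glue P Q = glueFam (P ∪ Q) := rfl

lemma glue_comm (P Q : Set (Set ℕ)) : glue P Q = glue Q P := by
  rw [glue_eq_glueFam, glue_eq_glueFam, union_comm]

lemma IsIntervalPartition.nonempty {P : Set (Set ℕ)} (hP : IsIntervalPartition P) :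
    ∀ X ∈ P, X.Nonempty :=
  fun X hX => (hP.2.1 X hX).1

lemma glue_rotate {I J K : Set (Set ℕ)} (hI : IsIntervalPartition I)
    (hJ : IsIntervalPartition J) (hK : IsIntervalPartition K) :
    glue (glue I J) K = glue (glue J K) I := by
  simp only [glue_eq_glueFam]
  rw [glueFam_glueFam_union (nonempty_of_mem_union hI.nonempty hJ.nonempty) hK.nonempty,
    glueFam_glueFam_union (nonempty_of_mem_union hJ.nonempty hK.nonempty) hI.nonempty,
    union_assoc, union_comm]

lemma sUnion_glue {I J : Set (Set ℕ)} (hI : IsIntervalPartition I)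
    (hJ : IsIntervalPartition J) : ⋃₀ glue I J = ⋃₀ I ∪ ⋃₀ J := by
  rw [glue_eq_glueFam, sUnion_glueFam (nonempty_of_mem_union hI.nonempty hJ.nonempty),
    sUnion_union]

lemma IsIntervalPartition.glue {I J : Set (Set ℕ)} (hI : IsIntervalPartition I)
    (hJ : IsIntervalPartition J) : IsIntervalPartition (glue I J) := by
  have hne := nonempty_of_mem_union hI.nonempty hJ.nonempty
  have hblock : ∀ X ∈ I ∪ J, IsIntervalBlock X := by
    rintro X (h | h)
    exacts [hI.2.1 X h, hJ.2.1 X h]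
  -- every point between two related points is related to them
  have hconv : ∀ x z, ptRel (I ∪ J) x z → ∀ y, (x ≤ y ∧ y ≤ z) ∨ (z ≤ y ∧ y ≤ x) →
      ptRel (I ∪ J) x y := by
    intro x z h
    induction h with
    | rel x z h =>
      obtain ⟨X, hX, hx, hz⟩ := h
      rintro y (⟨h1, h2⟩ | ⟨h1, h2⟩)
      · exact ptRel.of_mem hX hx ((hblock X hX).2.2 x hx z hz y h1 h2)
      · exact ptRel.of_mem hX hx ((hblock X hX).2.2 z hz x hx y h1 h2)
    | refl x =>
      intro y hy
      obtain rfl : x = y := by omega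
      exact Relation.EqvGen.refl _
    | symm x z h ih =>
      intro y hy
      exact (ptRel.symm h).trans (ih y (by omega))
    | trans x w z h h' ih1 ih2 =>
      intro y hy
      by_cases hc : (x ≤ y ∧ y ≤ w) ∨ (w ≤ y ∧ y ≤ x)
      · exact ih1 y hc
      · exact ptRel.trans h (ih2 y (by omega))
  refine ⟨?_, ?_, ?_⟩
  · rw [sUnion_glue hI hJ]
    exact hI.1.union hJ.1
  · intro B hB
    refine ⟨nonempty_of_mem_glueFam hne hB, fun y hy => ?_, ?_⟩
    · have : y ∈ ⋃₀ (I ∪ J) := by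
        rw [← sUnion_glueFam hne]
        exact ⟨B, hB, hy⟩
      obtain ⟨X, hX, hyX⟩ := this
      exact (hblock X hX).2.1 y hyX
    · obtain ⟨a, _, rfl⟩ := (mem_glueFam hne).1 hB
      intro x hx z hz y h1 h2
      exact ptRel.trans hx (hconv x z (ptRel.trans (ptRel.symm hx) hz) y (Or.inl ⟨h1, h2⟩))
  · intro B hB C hC hBC
    obtain ⟨a, _, rfl⟩ := (mem_glueFam hne).1 hB
    obtain ⟨b, _, rfl⟩ := (mem_glueFam hne).1 hC
    by_contra hcon
    obtain ⟨c, hac, hbc⟩ := nonempty_iff_ne_empty.2 hcon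
    apply hBC
    have hab : ptRel (I ∪ J) a b := ptRel.trans hac (ptRel.symm hbc)
    ext y
    exact ⟨fun h => hab.symm.trans h, fun h => hab.trans h⟩

/-! ### Transport of families along a map -/

/-- The family of images of the members of `P` under `f`; `stdIP P` is
`mapFam (stdMap (⋃₀ P)) P` by definition. -/
def mapFam (f : ℕ → ℕ) (P : Set (Set ℕ)) : Set (Set ℕ) := (fun B => f '' B) '' P

lemma stdIP_eq_mapFam (P : Set (Set ℕ)) : stdIP P = mapFam (stdMap (⋃₀ P)) P := rfl

lemma sUnion_mapFam (f : ℕ → ℕ) (P : Set (Set ℕ)) : ⋃₀ mapFam f P = f '' ⋃₀ P := by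
  rw [mapFam, sUnion_image, sUnion_eq_biUnion, image_iUnion₂]

lemma mapFam_mapFam_of_leftInvOn {f g : ℕ → ℕ} {P : Set (Set ℕ)} (h : LeftInvOn g f (⋃₀ P)) :
    mapFam g (mapFam f P) = P := by
  have : ∀ B ∈ P, g '' (f '' B) = B := fun B hB =>
    (h.mono (subset_sUnion_of_mem hB)).image_image
  rw [mapFam, mapFam, image_image]
  ext C
  constructor
  · rintro ⟨B, hB, rfl⟩
    simpa only [this B hB] using hB
  · intro hC
    exact ⟨C, hC, this C hC⟩

lemma mapFam_injective {f : ℕ → ℕ} {P Q : Set (Set ℕ)} (h : InjOn f (⋃₀ P))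
    (hPQ : ⋃₀ P = ⋃₀ Q) (he : mapFam f P = mapFam f Q) : P = Q := by
  have h1 := mapFam_mapFam_of_leftInvOn (P := P) h.leftInvOn_invFunOn
  have h2 := mapFam_mapFam_of_leftInvOn (P := Q) (hPQ ▸ h.leftInvOn_invFunOn)
  rw [← h1, he, hPQ, h2]

lemma stdMap_image {f : ℕ → ℕ} {A C : Set ℕ} (hf : StrictMonoOn f A) (hC : C ⊆ A) {x : ℕ}
    (hx : x ∈ C) : stdMap (f '' C) (f x) = stdMap C x := by
  have : {y ∈ f '' C | y ≤ f x} = f '' {y ∈ C | y ≤ x} := by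
    ext y
    constructor
    · rintro ⟨⟨z, hz, rfl⟩, h⟩
      exact ⟨z, ⟨hz, (hf.le_iff_le (hC hz) (hC hx)).1 h⟩, rfl⟩
    · rintro ⟨z, ⟨hz, h⟩, rfl⟩
      exact ⟨⟨z, hz, rfl⟩, (hf.le_iff_le (hC hz) (hC hx)).2 h⟩
  rw [stdMap, stdMap, this, InjOn.ncard_image]
  exact hf.injOn.mono (fun y hy => hC hy.1)

/-- Standardization only depends on a partition up to order-preserving relabelling. -/
lemma stdIP_mapFam {f : ℕ → ℕ} {P : Set (Set ℕ)} (hf : StrictMonoOn f (⋃₀ P)) :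
    stdIP (mapFam f P) = stdIP P := by
  rw [stdIP, stdIP, sUnion_mapFam, mapFam, image_image]
  refine image_congr fun B hB => ?_
  rw [image_image]
  exact image_congr fun x hx => stdMap_image hf subset_rfl ⟨B, hB, hx⟩

lemma glueFam_mapFam {f : ℕ → ℕ} {S : Set (Set ℕ)} (hf : InjOn f (⋃₀ S))
    (hS : ∀ X ∈ S, X.Nonempty) : glueFam (mapFam f S) = mapFam f (glueFam S) := by
  have hfwd : ∀ x y, ptRel S x y → ptRel (mapFam f S) (f x) (f y) := by
    intro x y h
    induction h with
    | rel x y h =>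
      obtain ⟨X, hX, hx, hy⟩ := h
      exact ptRel.of_mem ⟨X, hX, rfl⟩ ⟨x, hx, rfl⟩ ⟨y, hy, rfl⟩
    | refl x => exact Relation.EqvGen.refl _
    | symm x y _ ih => exact ih.symm
    | trans x y z _ _ ih1 ih2 => exact ih1.trans ih2
  have hbwd : ∀ a b, ptRel (mapFam f S) a b →
      a = b ∨ ∃ x ∈ ⋃₀ S, ∃ y ∈ ⋃₀ S, a = f x ∧ b = f y ∧ ptRel S x y := by
    intro a b h
    induction h with
    | rel a b h =>
      obtain ⟨_, ⟨X, hX, rfl⟩, ⟨x, hx, rfl⟩, ⟨y, hy, rfl⟩⟩ := h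
      exact Or.inr ⟨x, ⟨X, hX, hx⟩, y, ⟨X, hX, hy⟩, rfl, rfl, ptRel.of_mem hX hx hy⟩
    | refl a => exact Or.inl rfl
    | symm a b _ ih =>
      rcases ih with rfl | ⟨x, hx, y, hy, rfl, rfl, h⟩
      · exact Or.inl rfl
      · exact Or.inr ⟨y, hy, x, hx, rfl, rfl, h.symm⟩
    | trans a b c _ _ ih1 ih2 =>
      rcases ih1 with rfl | ⟨x, hx, y, hy, rfl, rfl, h⟩
      · exact ih2
      rcases ih2 with rfl | ⟨y', hy', z, hz, he, rfl, h'⟩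
      · exact Or.inr ⟨x, hx, y, hy, rfl, rfl, h⟩
      · obtain rfl := hf hy hy' he
        exact Or.inr ⟨x, hx, z, hz, rfl, rfl, h.trans h'⟩
  have hclass : ∀ x ∈ ⋃₀ S, {b | ptRel (mapFam f S) (f x) b} = f '' {y | ptRel S x y} := by
    intro x hx
    ext b
    constructor
    · intro h
      rcases hbwd _ _ h with rfl | ⟨x', hx', y, hy, he, rfl, h⟩
      · exact ⟨x, Relation.EqvGen.refl _, rfl⟩
      · obtain rfl := hf hx hx' he
        exact ⟨y, h, rfl⟩
    · rintro ⟨y, hy, rfl⟩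
      exact hfwd _ _ hy
  have hne : ∀ X ∈ mapFam f S, X.Nonempty := by
    rintro _ ⟨X, hX, rfl⟩
    exact (hS X hX).image f
  ext C
  rw [mem_glueFam hne, sUnion_mapFam]
  constructor
  · rintro ⟨_, ⟨x, hx, rfl⟩, rfl⟩
    exact ⟨_, (mem_glueFam hS).2 ⟨x, hx, rfl⟩, (hclass x hx).symm⟩
  · rintro ⟨D, hD, rfl⟩
    obtain ⟨x, hx, rfl⟩ := (mem_glueFam hS).1 hD
    exact ⟨f x, ⟨x, hx, rfl⟩, (hclass x hx).symm⟩

/-- An order-preserving map sending the interval partition `J` to an interval partition also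
sends every refinement of part of `J` to an interval partition: inside a block of `J` it maps
intervals to intervals. -/
lemma IsIntervalPartition.mapFam {f : ℕ → ℕ} {I J : Set (Set ℕ)} (hI : IsIntervalPartition I)
    (hIJ : ∀ B ∈ I, ∃ C ∈ J, B ⊆ C) (hf : StrictMonoOn f (⋃₀ J))
    (hJ : IsIntervalPartition (mapFam f J)) : IsIntervalPartition (mapFam f I) := by
  refine ⟨?_, ?_, ?_⟩
  · rw [sUnion_mapFam]
    exact hI.1.image f
  · rintro _ ⟨B, hB, rfl⟩
    obtain ⟨C, hC, hBC⟩ := hIJ B hB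
    have hCb := hJ.2.1 _ ⟨C, hC, rfl⟩
    have hCJ : C ⊆ ⋃₀ J := subset_sUnion_of_mem hC
    refine ⟨(hI.nonempty B hB).image f, ?_, ?_⟩
    · rintro _ ⟨x, hx, rfl⟩
      exact hCb.2.1 _ ⟨x, hBC hx, rfl⟩
    · rintro _ ⟨x, hx, rfl⟩ _ ⟨z, hz, rfl⟩ y h1 h2
      obtain ⟨w, hw, rfl⟩ := hCb.2.2 _ ⟨x, hBC hx, rfl⟩ _ ⟨z, hBC hz, rfl⟩ y h1 h2
      exact ⟨w, (hI.2.1 B hB).2.2 x hx z hz w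
        ((hf.le_iff_le (hCJ (hBC hx)) (hCJ hw)).1 h1)
        ((hf.le_iff_le (hCJ hw) (hCJ (hBC hz))).1 h2), rfl⟩
  · rintro _ ⟨B, hB, rfl⟩ _ ⟨C, hC, rfl⟩ hne
    have hsub : ∀ B ∈ I, B ⊆ ⋃₀ J := fun B hB => by
      obtain ⟨D, hD, hBD⟩ := hIJ B hB
      exact hBD.trans (subset_sUnion_of_mem hD)
    change f '' B ∩ f '' C = ∅
    rw [← hf.injOn.image_inter (hsub B hB) (hsub C hC),
      hI.2.2 B hB C hC (fun h => hne (by rw [h])), image_empty]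

/-! ### Standardization -/

lemma stdMap_strictMonoOn {A : Set ℕ} (hA : A.Finite) : StrictMonoOn (stdMap A) A := by
  intro x _ y hy hxy
  refine ncard_lt_ncard ?_ (hA.subset (sep_subset _ _))
  refine ⟨fun z hz => ⟨hz.1, hz.2.trans hxy.le⟩, fun h => ?_⟩
  exact absurd (h ⟨hy, le_rfl⟩).2 (not_le.2 hxy)

lemma stdMap_image_self {A : Set ℕ} (hA : A.Finite) : stdMap A '' A = Icc 1 A.ncard := by
  refine eq_of_subset_of_ncard_le ?_ ?_ (finite_Icc _ _)
  · rintro _ ⟨x, hx, rfl⟩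
    refine ⟨?_, ncard_le_ncard (sep_subset _ _) hA⟩
    exact (ncard_pos (hA.subset (sep_subset _ _))).2 ⟨x, hx, le_rfl⟩
  · rw [(stdMap_strictMonoOn hA).injOn.ncard_image, ncard_eq_toFinset_card']
    simp

lemma isStdIP_stdIP {J : Set (Set ℕ)} (hJ : IsIntervalPartition J) : IsStdIP (stdIP J) := by
  have hmono := stdMap_strictMonoOn hJ.1
  have himg := stdMap_image_self hJ.1
  refine ⟨?_, (⋃₀ J).ncard, by rw [stdIP_eq_mapFam, sUnion_mapFam, himg]⟩
  refine ⟨?_, ?_, ?_⟩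
  · rw [stdIP_eq_mapFam, sUnion_mapFam, himg]
    exact finite_Icc _ _
  · rintro _ ⟨B, hB, rfl⟩
    have hBJ : B ⊆ ⋃₀ J := subset_sUnion_of_mem hB
    have hmem : ∀ x ∈ B, stdMap (⋃₀ J) x ∈ Icc 1 (⋃₀ J).ncard := fun x hx =>
      himg ▸ mem_image_of_mem _ (hBJ hx)
    refine ⟨(hJ.nonempty B hB).image _, ?_, ?_⟩
    · rintro _ ⟨x, hx, rfl⟩
      exact (hmem x hx).1
    · rintro _ ⟨x, hx, rfl⟩ _ ⟨z, hz, rfl⟩ y h1 h2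
      have hy : y ∈ stdMap (⋃₀ J) '' ⋃₀ J := by
        rw [himg]
        exact ⟨(hmem x hx).1.trans h1, h2.trans (hmem z hz).2⟩
      obtain ⟨w, hw, rfl⟩ := hy
      exact ⟨w, (hJ.2.1 B hB).2.2 x hx z hz w ((hmono.le_iff_le (hBJ hx) hw).1 h1)
        ((hmono.le_iff_le hw (hBJ hz)).1 h2), rfl⟩
  · rintro _ ⟨B, hB, rfl⟩ _ ⟨C, hC, rfl⟩ hne
    change stdMap (⋃₀ J) '' B ∩ stdMap (⋃₀ J) '' C = ∅
    rw [← hmono.injOn.image_inter (subset_sUnion_of_mem hB) (subset_sUnion_of_mem hC),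
      hJ.2.2 B hB C hC (fun h => hne (by rw [h])), image_empty]

/-! ### Section coefficients as numbers of pairs of partitions -/

/-- The pairs of interval partitions with standardizations `s` and `t` whose gluing is `g`. -/
def gluePairs (s t g : Set (Set ℕ)) : Set (Set (Set ℕ) × Set (Set ℕ)) :=
  {p | IsIntervalPartition p.1 ∧ IsIntervalPartition p.2 ∧
    stdIP p.1 = s ∧ stdIP p.2 = t ∧ glue p.1 p.2 = g}

/-- A partition is determined by its ground set and its standardization, so `secCoeff`, which
counts pairs of ground sets, also counts pairs of partitions. -/
lemma secCoeff_eq (s t g : Set (Set ℕ)) : secCoeff s t g = (gluePairs s t g).ncard := by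
  have hinj : ∀ I I' : Set (Set ℕ), IsIntervalPartition I → ⋃₀ I = ⋃₀ I' → stdIP I = stdIP I' →
      I = I' := by
    intro I I' hI hU hs
    rw [stdIP_eq_mapFam, stdIP_eq_mapFam, ← hU] at hs
    exact mapFam_injective (stdMap_strictMonoOn hI.1).injOn hU hs
  have himg : {p : Set ℕ × Set ℕ | p.1 ∪ p.2 = ⋃₀ g ∧
      ∃ I I' : Set (Set ℕ), IsIntervalPartitionOf I p.1 ∧ IsIntervalPartitionOf I' p.2 ∧
        stdIP I = s ∧ stdIP I' = t ∧ glue I I' = g} =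
      (fun p : Set (Set ℕ) × Set (Set ℕ) => (⋃₀ p.1, ⋃₀ p.2)) '' gluePairs s t g := by
    ext ⟨A, A'⟩
    constructor
    · rintro ⟨_, I, I', ⟨hI, rfl⟩, ⟨hI', rfl⟩, h1, h2, h3⟩
      exact ⟨(I, I'), ⟨hI, hI', h1, h2, h3⟩, rfl⟩
    · rintro ⟨⟨I, I'⟩, ⟨hI, hI', h1, h2, h3⟩, he⟩
      obtain ⟨rfl, rfl⟩ := Prod.mk.inj he
      refine ⟨?_, I, I', ⟨hI, rfl⟩, ⟨hI', rfl⟩, h1, h2, h3⟩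
      rw [← h3]
      exact (sUnion_glue hI hI').symm
  rw [secCoeff, himg, InjOn.ncard_image]
  rintro ⟨I, I'⟩ ⟨hI, hI', h1, h2, -⟩ ⟨K, K'⟩ ⟨-, -, k1, k2, -⟩ he
  obtain ⟨e1, e2⟩ := Prod.mk.inj he
  exact Prod.ext (hinj _ _ hI e1 (h1.trans k1.symm)) (hinj _ _ hI' e2 (h2.trans k2.symm))

lemma gluePairs_comm (s t g : Set (Set ℕ)) :
    (gluePairs s t g).ncard = (gluePairs t s g).ncard := by
  have : gluePairs t s g = Prod.swap '' gluePairs s t g := by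
    ext ⟨I, J⟩
    rw [image_swap_eq_preimage_swap]
    simp only [gluePairs, mem_ofPred_eq, mem_preimage, Prod.swap_prod_mk, glue_comm I J]
    tauto
  rw [this, ncard_image_of_injective _ Prod.swap_injective]

lemma gluePairs_finite (s t : Set (Set ℕ)) {g : Set (Set ℕ)} (hg : (⋃₀ g).Finite) :
    (gluePairs s t g).Finite := by
  refine (hg.powerset.powerset.prod hg.powerset.powerset).subset ?_
  rintro ⟨I, J⟩ ⟨hI, hJ, -, -, rfl⟩
  have h : ⋃₀ I ∪ ⋃₀ J ⊆ ⋃₀ glue I J := (sUnion_glue hI hJ).ge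
  exact ⟨fun B hB => (subset_sUnion_of_mem hB).trans (subset_union_left.trans h),
    fun B hB => (subset_sUnion_of_mem hB).trans (subset_union_right.trans h)⟩

lemma mapFam_mem_gluePairs {f : ℕ → ℕ} {s t J : Set (Set ℕ)} (hf : StrictMonoOn f (⋃₀ J))
    (hJ : IsIntervalPartition (mapFam f J)) {p : Set (Set ℕ) × Set (Set ℕ)}
    (hp : p ∈ gluePairs s t J) :
    (mapFam f p.1, mapFam f p.2) ∈ gluePairs s t (mapFam f J) := by
  obtain ⟨I, I'⟩ := p
  obtain ⟨hI, hI', rfl, rfl, rfl⟩ := hp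
  dsimp only at *
  have hne := nonempty_of_mem_union hI.nonempty hI'.nonempty
  have hU := sUnion_glue hI hI'
  refine ⟨hI.mapFam (fun B hB => exists_superset_glueFam hne (Or.inl hB)) hf hJ,
    hI'.mapFam (fun B hB => exists_superset_glueFam hne (Or.inr hB)) hf hJ,
    stdIP_mapFam (hf.mono (hU ▸ subset_union_left)),
    stdIP_mapFam (hf.mono (hU ▸ subset_union_right)), ?_⟩
  have hunion : mapFam f I ∪ mapFam f I' = mapFam f (I ∪ I') := (image_union _ _ _).symm
  dsimp only
  rw [glue_eq_glueFam, glue_eq_glueFam, hunion, glueFam_mapFam _ hne]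
  rw [sUnion_union, ← hU]
  exact hf.injOn

/-- The number of ways to write `J` as a gluing of partitions of given standardizations depends
only on the standardization of `J`. -/
lemma ncard_gluePairs_stdIP (s t : Set (Set ℕ)) {J : Set (Set ℕ)} (hJ : IsIntervalPartition J) :
    (gluePairs s t (stdIP J)).ncard = (gluePairs s t J).ncard := by
  set f := stdMap (⋃₀ J) with hf_def
  have hf : StrictMonoOn f (⋃₀ J) := stdMap_strictMonoOn hJ.1
  set g := Function.invFunOn f (⋃₀ J) with hg_def
  have hgf : LeftInvOn g f (⋃₀ J) := hf.injOn.leftInvOn_invFunOn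
  have hfg : LeftInvOn f g (f '' ⋃₀ J) := by
    rintro _ ⟨x, hx, rfl⟩
    rw [hgf hx]
  have hgJ : mapFam g (mapFam f J) = J := mapFam_mapFam_of_leftInvOn hgf
  have hg : StrictMonoOn g (⋃₀ mapFam f J) := by
    rw [sUnion_mapFam]
    rintro _ ⟨x, hx, rfl⟩ _ ⟨y, hy, rfl⟩ h
    rw [hgf hx, hgf hy]
    exact (hf.lt_iff_lt hx hy).1 h
  have hst : stdIP J = mapFam f J := rfl
  have hsub : ∀ {K : Set (Set ℕ)} {p : Set (Set ℕ) × Set (Set ℕ)}, p ∈ gluePairs s t K →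
      ⋃₀ p.1 ⊆ ⋃₀ K ∧ ⋃₀ p.2 ⊆ ⋃₀ K := by
    rintro K p ⟨h1, h2, -, -, rfl⟩
    rw [sUnion_glue h1 h2]
    exact ⟨subset_union_left, subset_union_right⟩
  have himg : gluePairs s t (mapFam f J) =
      (fun p : Set (Set ℕ) × Set (Set ℕ) => (mapFam f p.1, mapFam f p.2)) '' gluePairs s t J := by
    ext p
    constructor
    · intro hp
      refine ⟨(mapFam g p.1, mapFam g p.2), ?_, ?_⟩
      · have := mapFam_mem_gluePairs hg (by rwa [hgJ]) hp
        rwa [hgJ] at this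
      · obtain ⟨h1, h2⟩ := hsub hp
        rw [sUnion_mapFam] at h1 h2
        exact Prod.ext (mapFam_mapFam_of_leftInvOn (hfg.mono h1))
          (mapFam_mapFam_of_leftInvOn (hfg.mono h2))
    · rintro ⟨q, hq, rfl⟩
      exact mapFam_mem_gluePairs hf (hst ▸ (isStdIP_stdIP hJ).1) hq
  rw [hst, himg, InjOn.ncard_image]
  intro p hp q hq he
  obtain ⟨e1, e2⟩ := Prod.mk.inj he
  obtain ⟨p1, p2⟩ := hsub hp
  obtain ⟨q1, q2⟩ := hsub hq
  refine Prod.ext ?_ ?_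
  · rw [← mapFam_mapFam_of_leftInvOn (hgf.mono p1), e1, mapFam_mapFam_of_leftInvOn (hgf.mono q1)]
  · rw [← mapFam_mapFam_of_leftInvOn (hgf.mono p2), e2, mapFam_mapFam_of_leftInvOn (hgf.mono q2)]

/-! ### Counting triples -/

/-- The triples of interval partitions with standardizations `s`, `t`, `u` that glue to `g`. -/
def glueTriples (s t u g : Set (Set ℕ)) : Set (Set (Set ℕ) × Set (Set ℕ) × Set (Set ℕ)) :=
  {p | IsIntervalPartition p.1 ∧ IsIntervalPartition p.2.1 ∧ IsIntervalPartition p.2.2 ∧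
    stdIP p.1 = s ∧ stdIP p.2.1 = t ∧ stdIP p.2.2 = u ∧ glue (glue p.1 p.2.1) p.2.2 = g}

lemma glueTriples_finite (s t u : Set (Set ℕ)) {g : Set (Set ℕ)} (hg : (⋃₀ g).Finite) :
    (glueTriples s t u g).Finite := by
  have hP := hg.powerset.powerset
  refine (hP.prod (hP.prod hP)).subset ?_
  rintro ⟨I, J, K⟩ ⟨hI, hJ, hK, -, -, -, rfl⟩
  have h : ⋃₀ I ∪ ⋃₀ J ∪ ⋃₀ K ⊆ ⋃₀ glue (glue I J) K := by
    rw [sUnion_glue (hI.glue hJ) hK, sUnion_glue hI hJ]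
  have h' := union_subset_iff.1 h
  have h'' := union_subset_iff.1 h'.1
  exact ⟨fun B hB => (subset_sUnion_of_mem hB).trans h''.1,
    fun B hB => (subset_sUnion_of_mem hB).trans h''.2,
    fun B hB => (subset_sUnion_of_mem hB).trans h'.2⟩

lemma glueTriples_rotate (s t u g : Set (Set ℕ)) :
    (glueTriples s t u g).ncard = (glueTriples t u s g).ncard := by
  refine ncard_congr (fun p _ => (p.2.1, p.2.2, p.1)) ?_ ?_ ?_
  · rintro ⟨I, J, K⟩ ⟨hI, hJ, hK, h1, h2, h3, h⟩
    exact ⟨hJ, hK, hI, h2, h3, h1, (glue_rotate hI hJ hK).symm.trans h⟩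
  · rintro ⟨I, J, K⟩ ⟨I', J', K'⟩ _ _ h
    simp only [Prod.mk.injEq] at h ⊢
    tauto
  · rintro ⟨J, K, I⟩ ⟨hJ, hK, hI, h2, h3, h1, h⟩
    exact ⟨(I, J, K), ⟨hI, hJ, hK, h1, h2, h3, (glue_rotate hI hJ hK).trans h⟩, rfl⟩

lemma ncard_eq_mul_of_fibers {α β : Type*} {A : Set α} {B : Set β} (hA : A.Finite)
    (hB : B.Finite) (f : α → β) (hf : MapsTo f A B) (n : ℕ)
    (hn : ∀ b ∈ B, {a ∈ A | f a = b}.ncard = n) : A.ncard = n * B.ncard := by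
  classical
  rw [ncard_eq_toFinset_card A hA, ncard_eq_toFinset_card B hB,
    Finset.card_eq_sum_card_fiberwise (f := f) (t := hB.toFinset) (by simpa using hf),
    Finset.sum_congr rfl (g := fun _ => n), Finset.sum_const, smul_eq_mul, mul_comm]
  intro b hb
  rw [← hn b (by simpa using hb), ← ncard_coe_finset]
  congr 1
  ext a
  simp

/-- A single summand counts the triples whose first two entries glue to a partition with
standardization `h`: choose that partition and the third entry first, then split it. -/
lemma secCoeff_mul_eq (s t u h : Set (Set ℕ)) {g : Set (Set ℕ)} (hg : (⋃₀ g).Finite) :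
    secCoeff s t h * secCoeff h u g =
      {p ∈ glueTriples s t u g | stdIP (glue p.1 p.2.1) = h}.ncard := by
  rw [secCoeff_eq, secCoeff_eq]
  symm
  refine ncard_eq_mul_of_fibers ((glueTriples_finite s t u hg).subset (sep_subset _ _))
    (gluePairs_finite h u hg) (fun p => (glue p.1 p.2.1, p.2.2)) ?_ _ ?_
  · rintro ⟨I, J, K⟩ ⟨⟨hI, hJ, hK, -, -, h3, h4⟩, h5⟩
    exact ⟨hI.glue hJ, hK, h5, h3, h4⟩
  · rintro ⟨L, K⟩ ⟨hL, hK, rfl, rfl, rfl⟩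
    dsimp only at *
    rw [ncard_gluePairs_stdIP s t hL]
    symm
    refine ncard_congr (fun p _ => (p.1, p.2, K)) ?_ ?_ ?_
    · rintro ⟨I, J⟩ ⟨hI, hJ, h1, h2, rfl⟩
      exact ⟨⟨⟨hI, hJ, hK, h1, h2, rfl, rfl⟩, rfl⟩, rfl⟩
    · rintro ⟨I, J⟩ ⟨I', J'⟩ _ _ he
      simp only [Prod.mk.injEq] at he ⊢
      tauto
    · rintro ⟨I, J, K'⟩ ⟨⟨⟨hI, hJ, -, h1, h2, -, -⟩, -⟩, he⟩
      obtain ⟨e1, e2⟩ := Prod.mk.inj he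
      dsimp only at *
      subst e2
      exact ⟨(I, J), ⟨hI, hJ, h1, h2, e1⟩, rfl⟩

lemma secCoeff_comm (s t g : Set (Set ℕ)) : secCoeff s t g = secCoeff t s g := by
  rw [secCoeff_eq, secCoeff_eq, gluePairs_comm]

lemma finsum_secCoeff_mul (s t u : Set (Set ℕ)) {g : Set (Set ℕ)} (hg : (⋃₀ g).Finite) :
    (∑ᶠ h ∈ {h : Set (Set ℕ) | IsStdIP h}, secCoeff s t h * secCoeff h u g) =
      (glueTriples s t u g).ncard ∧
    {h : Set (Set ℕ) | IsStdIP h ∧ secCoeff s t h * secCoeff h u g ≠ 0}.Finite := by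
  classical
  have hT := glueTriples_finite s t u hg
  set φ : Set (Set ℕ) × Set (Set ℕ) × Set (Set ℕ) → Set (Set ℕ) :=
    fun p => stdIP (glue p.1 p.2.1) with hφ
  set H : Finset (Set (Set ℕ)) := hT.toFinset.image φ with hH
  have hsupp : ∀ h, secCoeff s t h * secCoeff h u g ≠ 0 → h ∈ H := by
    intro h hne
    rw [secCoeff_mul_eq s t u h hg] at hne
    obtain ⟨p, hp, rfl⟩ := nonempty_of_ncard_ne_zero hne
    exact Finset.mem_image_of_mem φ (hT.mem_toFinset.2 hp)
  have hstd : ∀ h ∈ H, IsStdIP h := by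
    intro h hh
    obtain ⟨p, hp, rfl⟩ := Finset.mem_image.1 hh
    obtain ⟨h1, h2, -⟩ := hT.mem_toFinset.1 hp
    exact isStdIP_stdIP (h1.glue h2)
  refine ⟨?_, H.finite_toSet.subset fun h hh => hsupp h hh.2⟩
  rw [finsum_mem_eq_sum_of_inter_support_eq (t := H), ncard_eq_toFinset_card _ hT,
    Finset.card_eq_sum_card_fiberwise (f := φ) (t := H)
      (fun p hp => Finset.mem_coe.2 (Finset.mem_image_of_mem φ hp))]
  · refine Finset.sum_congr rfl fun h _ => ?_
    rw [secCoeff_mul_eq s t u h hg, ← ncard_coe_finset]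
    congr 1
    ext p
    simp [hφ]
  · ext h
    constructor
    · rintro ⟨_, h2⟩
      exact ⟨hsupp h h2, h2⟩
    · rintro ⟨h1, h2⟩
      exact ⟨hstd h h1, h2⟩

/-- coassociativity of the quasi-shuffle section coefficients. -/
theorem secCoeff_coassoc (s t u g : Set (Set ℕ))
    (hs : IsStdIP s) (ht : IsStdIP t) (hu : IsStdIP u) (hg : IsStdIP g) :
    (∑ᶠ h ∈ {h : Set (Set ℕ) | IsStdIP h}, secCoeff s t h * secCoeff h u g)
      = (∑ᶠ h ∈ {h : Set (Set ℕ) | IsStdIP h}, secCoeff t u h * secCoeff s h g) ∧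
    {h : Set (Set ℕ) | IsStdIP h ∧ secCoeff s t h * secCoeff h u g ≠ 0}.Finite ∧
    {h : Set (Set ℕ) | IsStdIP h ∧ secCoeff t u h * secCoeff s h g ≠ 0}.Finite := by
  have hgf : (⋃₀ g).Finite := hg.1.1
  obtain ⟨h1, h2⟩ := finsum_secCoeff_mul s t u hgf
  obtain ⟨h3, h4⟩ := finsum_secCoeff_mul t u s hgf
  simp only [secCoeff_comm s _ g]
  exact ⟨by rw [h1, h3, glueTriples_rotate], h2, h4⟩
end

section
/- Let 𝔰, 𝔱 ∈ IPs have ground sets [m], [n], let T := {m+1,…,m+n} and 𝔱' := {B + m : B a block of 𝔱}, and suppose 𝓘 ∈ IP(A), 𝓘' ∈ IP(B) satisfy 𝓘 ⋎ 𝓘' = 𝔰 • 𝔱. Then: (1) 𝓘 = 𝓘(A ∩ [m]) ⊎ 𝓘(A ∩ T) and 𝓘' = 𝓘'(B ∩ [m]) ⊎ 𝓘'(B ∩ T); (2) 𝓘(A ∩ [m]) ⋎ 𝓘'(B ∩ [m]) = 𝔰 and 𝓘(A ∩ T) ⋎ 𝓘'(B ∩ T) = 𝔱'; (3) std(𝓘)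 = std(𝓘(A ∩ [m])) • std(𝓘(A ∩ T)) and std(𝓘') = std(𝓘'(B ∩ [m])) • std(𝓘'(B ∩ T)). -/
/-!
Every block `X` of `𝓘` or `𝓘'` is contained in its glued class, which is a block of `𝔰 • 𝔱`, so `X`
lies entirely in `[m]` or entirely in `T = {m+1, …, m+n}` (`block_subset_of_glue`). Since a block is
an interval, it is contained in a single clique of any set containing it, and hence restricting `𝓘`
to `A ∩ [m]` or `A ∩ T` merely selects the blocks contained in `[m]`, respectively `T`
(`restrictIP_eq_sep`); this gives (1). No block inside `[m]` meets a block outside it, so the gluing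
classes of the selected blocks are exactly the gluing classes contained in `[m]`
(`glue_sep`), and likewise for `T`; this gives (2). For (3), all elements of the first
part lie below all those of the second, so the standardization map of the whole ground set restricts
to that of the first part, and on the second part to its own standardization map shifted by the size
of the first (`stdIP_union`).
-/

open Set

/-- Two points of an interval `X ⊆ C` lie in the same clique of `C`. -/
lemma cliqueRel_of_block {X C : Set ℕ} (hX : IsIntervalBlock X) (hXC : X ⊆ C)
    {x y : ℕ} (hx : x ∈ X) (hy : y ∈ X) : cliqueRel C x y := by
  have key : ∀ d x, x ∈ X → x + d ∈ X → cliqueRel C x (x + d) := by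
    intro d
    induction d with
    | zero => intro x _ _; exact Relation.EqvGen.refl _
    | succ d ih =>
      intro x hx hxd
      have hmid : x + d ∈ X := hX.2.2 x hx _ hxd (x + d) (by omega) (by omega)
      exact (ih x hx hmid).trans _ _ _
        (Relation.EqvGen.rel _ _ ⟨hXC hmid, hXC hxd, by omega⟩)
  rcases le_total x y with h | h
  · obtain ⟨d, rfl⟩ := Nat.exists_eq_add_of_le h
    exact key d x hx hy
  · obtain ⟨d, rfl⟩ := Nat.exists_eq_add_of_le h
    exact (key d y hy hx).symm _ _

/-- If no block of `P` straddles the boundary of `S`, then restricting `P` to `S` selects the blocks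
of `P` contained in `S`. -/
lemma restrictIP_eq_sep {P : Set (Set ℕ)} {A S : Set ℕ} (hP : IsIntervalPartitionOf P A)
    (hS : ∀ X ∈ P, (X ∩ S).Nonempty → X ⊆ S) :
    restrictIP P (A ∩ S) = {X ∈ P | X ⊆ S} := by
  obtain ⟨⟨-, hblock, -⟩, hA⟩ := hP
  have hsub : ∀ X ∈ P, X ⊆ A := fun X hX => hA ▸ subset_sUnion_of_mem hX
  ext Z
  constructor
  · rintro ⟨hne, X, hX, c, ⟨x, hx, rfl⟩, rfl⟩
    obtain ⟨z, hzX, hzA, hxz⟩ := nonempty_iff_ne_empty.mpr hne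
    have hXS : X ⊆ S := hS X hX ⟨z, hzX, hzA.2⟩
    have hXAS : X ⊆ A ∩ S := subset_inter (hsub X hX) hXS
    have heq : X ∩ {y ∈ A ∩ S | cliqueRel (A ∩ S) x y} = X :=
      inter_eq_left.mpr fun y hy =>
        ⟨hXAS hy, hxz.trans _ _ _ (cliqueRel_of_block (hblock X hX) hXAS hzX hy)⟩
    change X ∩ {y ∈ A ∩ S | cliqueRel (A ∩ S) x y} ∈ _
    rw [heq]
    exact ⟨hX, hXS⟩
  · rintro ⟨hZ, hZS⟩
    have hZAS : Z ⊆ A ∩ S := subset_inter (hsub Z hZ) hZS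
    obtain ⟨x, hx⟩ := (hblock Z hZ).1
    refine ⟨(hblock Z hZ).1.ne_empty, Z, hZ, _, ⟨x, hZAS hx, rfl⟩, ?_⟩
    exact Eq.symm <| inter_eq_left.mpr fun y hy =>
      ⟨hZAS hy, cliqueRel_of_block (hblock Z hZ) hZAS hx hy⟩

/-- Gluing chains never leave a set `S` whose boundary is straddled by no block. -/
lemma glueRel_sep {U : Set (Set ℕ)} {S : Set ℕ}
    (hS : ∀ X ∈ U, (X ∩ S).Nonempty → X ⊆ S) {X Y : Set ℕ} (h : glueRel U X Y) :
    (X ⊆ S ↔ Y ⊆ S) ∧ (X ⊆ S → glueRel {Z ∈ U | Z ⊆ S} X Y) := by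
  induction h with
  | rel X Y h =>
    obtain ⟨hX, hY, z, hzX, hzY⟩ := h
    have hiff : X ⊆ S ↔ Y ⊆ S :=
      ⟨fun h => hS Y hY ⟨z, hzY, h hzX⟩, fun h => hS X hX ⟨z, hzX, h hzY⟩⟩
    exact ⟨hiff, fun h =>
      Relation.EqvGen.rel _ _ ⟨⟨hX, h⟩, ⟨hY, hiff.1 h⟩, z, hzX, hzY⟩⟩
  | refl X => exact ⟨Iff.rfl, fun _ => Relation.EqvGen.refl _⟩
  | symm X Y _ ih => exact ⟨ih.1.symm, fun h => (ih.2 (ih.1.2 h)).symm _ _⟩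
  | trans X Y Z _ _ ih₁ ih₂ =>
    exact ⟨ih₁.1.trans ih₂.1, fun h => (ih₁.2 h).trans _ _ _ (ih₂.2 (ih₁.1.1 h))⟩

lemma glueRel_mono {U V : Set (Set ℕ)} (hUV : U ⊆ V) {X Y : Set ℕ} (h : glueRel U X Y) :
    glueRel V X Y := by
  refine Relation.EqvGen.mono ?_ X Y h
  rintro X Y ⟨hX, hY, hXY⟩
  exact ⟨hUV hX, hUV hY, hXY⟩

/-- If no block straddles the boundary of `S`, then gluing the blocks inside `S` yields exactly the
glued blocks inside `S`. -/
lemma glue_sep {P Q : Set (Set ℕ)} {S : Set ℕ}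
    (hS : ∀ X ∈ P ∪ Q, (X ∩ S).Nonempty → X ⊆ S) :
    glue {X ∈ P | X ⊆ S} {X ∈ Q | X ⊆ S} = {g ∈ glue P Q | g ⊆ S} := by
  have hU : {X ∈ P | X ⊆ S} ∪ {X ∈ Q | X ⊆ S} = {X ∈ P ∪ Q | X ⊆ S} := by
    ext X
    simp only [mem_union, mem_ofPred_eq]
    tauto
  have hclass : ∀ X, X ⊆ S →
      {Y ∈ {Z ∈ P ∪ Q | Z ⊆ S} | glueRel {Z ∈ P ∪ Q | Z ⊆ S} X Y} =
        {Y ∈ P ∪ Q | glueRel (P ∪ Q) X Y} := by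
    intro X hXS
    ext Y
    constructor
    · rintro ⟨hY, h⟩
      exact ⟨hY.1, glueRel_mono (fun _ h => h.1) h⟩
    · rintro ⟨hY, h⟩
      have := glueRel_sep hS h
      exact ⟨⟨hY, this.1.1 hXS⟩, this.2 hXS⟩
  ext g
  unfold glue
  rw [hU]
  constructor
  · rintro ⟨X, ⟨hX, hXS⟩, rfl⟩
    dsimp only
    rw [hclass X hXS]
    exact ⟨⟨X, hX, rfl⟩, sUnion_subset fun Y hY => (glueRel_sep hS hY.2).1.1 hXS⟩
  · rintro ⟨⟨X, hX, rfl⟩, hg⟩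
    have hXS : X ⊆ S :=
      (subset_sUnion_of_mem (show X ∈ {Y ∈ P ∪ Q | glueRel (P ∪ Q) X Y} from
        ⟨hX, Relation.EqvGen.refl _⟩)).trans hg
    refine ⟨X, ⟨hX, hXS⟩, ?_⟩
    dsimp only
    rw [hclass X hXS]

/-- Every block is contained in its glued class. -/
lemma block_subset_of_glue {P Q : Set (Set ℕ)} {X : Set ℕ} (hX : X ∈ P ∪ Q) :
    ∃ g ∈ glue P Q, X ⊆ g :=
  ⟨_, ⟨X, hX, rfl⟩, subset_sUnion_of_mem
    (show X ∈ {Y ∈ P ∪ Q | glueRel (P ∪ Q) X Y} from ⟨hX, Relation.EqvGen.refl _⟩)⟩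

lemma stdMap_injOn {S : Set ℕ} (hS : S.Finite) : InjOn (stdMap S) S := by
  have key : ∀ x ∈ S, ∀ y ∈ S, x < y → stdMap S x < stdMap S y := by
    intro x _ y hy hxy
    refine ncard_lt_ncard ?_ (hS.subset fun _ h => h.1)
    refine ⟨fun z hz => ⟨hz.1, hz.2.trans hxy.le⟩, fun h => ?_⟩
    have := (h (show y ∈ {z ∈ S | z ≤ y} from ⟨hy, le_rfl⟩)).2
    omega
  intro x hx y hy hxy
  rcases lt_trichotomy x y with h | h | h
  · exact absurd hxy (key x hx y hy h).ne
  · exact h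
  · exact absurd hxy (key y hy x hx h).ne'

lemma ncard_sUnion_stdIP {P : Set (Set ℕ)} (hP : (⋃₀ P).Finite) :
    (⋃₀ stdIP P).ncard = (⋃₀ P).ncard := by
  have h : ⋃₀ stdIP P = stdMap (⋃₀ P) '' ⋃₀ P := by
    rw [stdIP, sUnion_image, sUnion_eq_biUnion, image_iUnion₂]
  rw [h, (stdMap_injOn hP).ncard_image]

/-- Standardization turns an ordered union of two families, the first supported below the second,
into a concatenation. -/
lemma stdIP_union {P Q : Set (Set ℕ)} (hP : (⋃₀ P).Finite) (hQ : (⋃₀ Q).Finite)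
    (hlt : ∀ x ∈ ⋃₀ P, ∀ y ∈ ⋃₀ Q, x < y) :
    stdIP (P ∪ Q) = concatIP (stdIP P) (stdIP Q) := by
  have hl : ∀ x ∈ ⋃₀ P, stdMap (⋃₀ (P ∪ Q)) x = stdMap (⋃₀ P) x := by
    intro x hx
    unfold stdMap
    congr 1
    ext y
    rw [sUnion_union]
    constructor
    · rintro ⟨hy | hy, hyx⟩
      · exact ⟨hy, hyx⟩
      · exact absurd (hlt x hx y hy) (not_lt.mpr hyx)
    · rintro ⟨hy, hyx⟩
      exact ⟨Or.inl hy, hyx⟩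
  have hr : ∀ x ∈ ⋃₀ Q, stdMap (⋃₀ (P ∪ Q)) x = stdMap (⋃₀ Q) x + (⋃₀ P).ncard := by
    intro x hx
    unfold stdMap
    have heq : {y ∈ ⋃₀ (P ∪ Q) | y ≤ x} = {y ∈ ⋃₀ Q | y ≤ x} ∪ ⋃₀ P := by
      ext y
      rw [sUnion_union]
      constructor
      · rintro ⟨hy | hy, hyx⟩
        · exact Or.inr hy
        · exact Or.inl ⟨hy, hyx⟩
      · rintro (⟨hy, hyx⟩ | hy)
        · exact ⟨Or.inr hy, hyx⟩
        · exact ⟨Or.inl hy, (hlt y hy x hx).le⟩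
    rw [heq]
    refine ncard_union_eq ?_ (hQ.subset fun _ h => h.1) hP
    exact disjoint_left.mpr fun y hy hy' => lt_irrefl _ (hlt y hy' y hy.1)
  rw [concatIP, ncard_sUnion_stdIP hP]
  unfold shiftIP
  rw [stdIP, image_union]
  congr 1
  · exact image_congr fun X hX => image_congr fun x hx => hl x ⟨X, hX, hx⟩
  · rw [stdIP, image_image]
    refine image_congr fun X hX => ?_
    rw [image_image]
    exact image_congr fun x hx => hr x ⟨X, hX, hx⟩

/-- Parts (1) and (3) for a single interval partition each of whose blocks lies in one of two
consecutive sets `S < T`. -/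
lemma split_of_blocks {P : Set (Set ℕ)} {A S T : Set ℕ} (hP : IsIntervalPartitionOf P A)
    (hlt : ∀ x ∈ S, ∀ y ∈ T, x < y) (hST : ∀ X ∈ P, X ⊆ S ∨ X ⊆ T) :
    P = {X ∈ P | X ⊆ S} ∪ {X ∈ P | X ⊆ T} ∧ {X ∈ P | X ⊆ S} ∩ {X ∈ P | X ⊆ T} = ∅ ∧
      stdIP P = concatIP (stdIP {X ∈ P | X ⊆ S}) (stdIP {X ∈ P | X ⊆ T}) := by
  have h1 : P = {X ∈ P | X ⊆ S} ∪ {X ∈ P | X ⊆ T} := by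
    ext X
    simp only [mem_union, mem_ofPred_eq]
    have := hST X
    tauto
  refine ⟨h1, ?_, ?_⟩
  · rw [eq_empty_iff_forall_notMem]
    rintro X ⟨⟨hX, hXS⟩, -, hXT⟩
    obtain ⟨x, hx⟩ := (hP.1.2.1 X hX).1
    exact lt_irrefl _ (hlt x (hXS hx) x (hXT hx))
  · conv_lhs => rw [h1]
    refine stdIP_union (hP.1.1.subset (sUnion_mono fun _ h => h.1))
      (hP.1.1.subset (sUnion_mono fun _ h => h.1)) ?_
    rintro x ⟨X, hX, hx⟩ y ⟨Y, hY, hy⟩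
    exact hlt x (hX.2 hx) y (hY.2 hy)

/-- decomposing a gluing along a concatenation `𝔰 • 𝔱`. -/
theorem glue_eq_concat_decomposition (m n : ℕ) (s t : Set (Set ℕ))
    (hs : IsIntervalPartitionOf s (Set.Icc 1 m))
    (ht : IsIntervalPartitionOf t (Set.Icc 1 n))
    (A B : Set ℕ) (I I' : Set (Set ℕ))
    (hI : IsIntervalPartitionOf I A) (hI' : IsIntervalPartitionOf I' B)
    (hglue : glue I I' = concatIP s t) :
    -- (1) each of `𝓘, 𝓘'` splits as a disjoint union of its restrictions
    (I = restrictIP I (A ∩ Set.Icc 1 m) ∪ restrictIP I (A ∩ Set.Icc (m + 1) (m + n)) ∧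
      restrictIP I (A ∩ Set.Icc 1 m) ∩ restrictIP I (A ∩ Set.Icc (m + 1) (m + n)) = ∅ ∧
      I' = restrictIP I' (B ∩ Set.Icc 1 m) ∪ restrictIP I' (B ∩ Set.Icc (m + 1) (m + n)) ∧
      restrictIP I' (B ∩ Set.Icc 1 m) ∩ restrictIP I' (B ∩ Set.Icc (m + 1) (m + n)) = ∅) ∧
    -- (2) the restrictions glue to `𝔰` and to the shifted `𝔱'`
    (glue (restrictIP I (A ∩ Set.Icc 1 m)) (restrictIP I' (B ∩ Set.Icc 1 m)) = s ∧
      glue (restrictIP I (A ∩ Set.Icc (m + 1) (m + n)))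
          (restrictIP I' (B ∩ Set.Icc (m + 1) (m + n))) = shiftIP m t) ∧
    -- (3) standardizations factor through concatenation
    (stdIP I = concatIP (stdIP (restrictIP I (A ∩ Set.Icc 1 m)))
        (stdIP (restrictIP I (A ∩ Set.Icc (m + 1) (m + n)))) ∧
      stdIP I' = concatIP (stdIP (restrictIP I' (B ∩ Set.Icc 1 m)))
        (stdIP (restrictIP I' (B ∩ Set.Icc (m + 1) (m + n))))) := by
  have hconcat : glue I I' = s ∪ shiftIP m t := by
    rw [hglue, concatIP, hs.2]
    simp
  have hlt : ∀ x ∈ Set.Icc 1 m, ∀ y ∈ Set.Icc (m + 1) (m + n), x < y := by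
    intro x hx y hy
    have := hx.2
    have := hy.1
    omega
  have hs_sub : ∀ X ∈ s, X ⊆ Set.Icc 1 m := fun X hX => hs.2 ▸ subset_sUnion_of_mem hX
  have ht_sub : ∀ X ∈ shiftIP m t, X ⊆ Set.Icc (m + 1) (m + n) := by
    rintro _ ⟨Y, hY, rfl⟩ _ ⟨y, hy, rfl⟩
    have hy' : y ∈ Set.Icc 1 n := ht.2 ▸ subset_sUnion_of_mem hY hy
    have := hy'.1
    have := hy'.2
    constructor <;> dsimp only <;> omega
  have ht_ne : ∀ X ∈ shiftIP m t, X.Nonempty := by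
    rintro _ ⟨Y, hY, rfl⟩
    exact (ht.1.2.1 Y hY).1.image _
  have hST : ∀ X ∈ I ∪ I', X ⊆ Set.Icc 1 m ∨ X ⊆ Set.Icc (m + 1) (m + n) := by
    intro X hX
    obtain ⟨g, hg, hXg⟩ := block_subset_of_glue hX
    rw [hconcat] at hg
    exact hg.imp (fun h => hXg.trans (hs_sub g h)) (fun h => hXg.trans (ht_sub g h))
  have hS : ∀ X ∈ I ∪ I', (X ∩ Set.Icc 1 m).Nonempty → X ⊆ Set.Icc 1 m := by
    rintro X hX ⟨x, hxX, hx⟩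
    exact (hST X hX).resolve_right fun h => lt_irrefl _ (hlt x hx x (h hxX))
  have hT : ∀ X ∈ I ∪ I', (X ∩ Set.Icc (m + 1) (m + n)).Nonempty →
      X ⊆ Set.Icc (m + 1) (m + n) := by
    rintro X hX ⟨x, hxX, hx⟩
    exact (hST X hX).resolve_left fun h => lt_irrefl _ (hlt x (h hxX) x hx)
  rw [restrictIP_eq_sep hI fun X hX => hS X (Or.inl hX),
    restrictIP_eq_sep hI fun X hX => hT X (Or.inl hX),
    restrictIP_eq_sep hI' fun X hX => hS X (Or.inr hX),
    restrictIP_eq_sep hI' fun X hX => hT X (Or.inr hX),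
    glue_sep hS, glue_sep hT, hconcat]
  obtain ⟨h1, h2, h3⟩ := split_of_blocks hI hlt fun X hX => hST X (Or.inl hX)
  obtain ⟨h1', h2', h3'⟩ := split_of_blocks hI' hlt fun X hX => hST X (Or.inr hX)
  refine ⟨⟨h1, h2, h1', h2'⟩, ⟨?_, ?_⟩, h3, h3'⟩
  · ext g
    constructor
    · rintro ⟨hg | hg, hgS⟩
      · exact hg
      · obtain ⟨x, hx⟩ := ht_ne g hg
        exact absurd (hlt x (hgS hx) x (ht_sub g hg hx)) (lt_irrefl _)
    · exact fun hg => ⟨Or.inl hg, hs_sub g hg⟩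
  · ext g
    constructor
    · rintro ⟨hg | hg, hgT⟩
      · obtain ⟨x, hx⟩ := (hs.1.2.1 g hg).1
        exact absurd (hlt x (hs_sub g hg hx) x (hgT hx)) (lt_irrefl _)
      · exact hg
    · exact fun hg => ⟨Or.inr hg, ht_sub g hg⟩
end
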